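/- Let W be a symmetric zero-diagonal N×N matrix, N = m+n with m, n ≥ 2, and let U_w = ((n−1)U_x + (m−1)U_y)/(N−2) under the permutation null. Then Var(U_w) = [2mn(m−1)(n−1)/(N(N−1)(N−2)(N−3))] · (W̃_2 − (2/(N−2))W̃_3), and this expression equals a positive constant times the squared Frobenius norm ‖Ŵ‖_F², where Ŵ is the doubly-centered matrix of W; consequently Var(U_w) ≥ 0 with equality iff Ŵ = 0. -/

import Mathlib

/-!
The weights in `U_w` are chosen so that additive matrices contribute only a constant. Write
`x i ∈ {0, 1}` for the indicator that `i` falls in the first group and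
`κ(x, x') = (n - 1) x x' + (m - 1) (1 - x) (1 - x')`. Then `∑_{j ≠ i} κ(x i, x j)` equals
`(m - 1) (n - 1)` for every `i` and every assignment. Off the diagonal `W i j = A i j + b i + b j`,
where `A = Ŵ` is symmetric with zero diagonal and zero row sums, so
`U_w = const + ∑ A i j x i x j` (`Uw_eq`).

The expectation of `∏_{i ∈ s} x i` depends only on the size of `s` and equals
`p_k = ∏_{a < k} (m - a) / (N - a)` for `#s = k` (`pE_prod`). Hence, for `i ≠ j` and `k ≠ l`,
`E[x i x j x k x l]` is `p₄`, plus `p₃ - p₄` for each coincidence between the two pairs, plus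
`p₂ - 2 p₃ + p₄` if the pairs agree as sets (`pE_four`). Against `A i j * A k l` the first two
kinds of terms vanish by the zero row sums, leaving
`Var U_w = 2 (p₂ - 2 p₃ + p₄) ‖A‖²` (`pE_quad_sq`). Finally `‖A‖²` expands to
`W̃₂ - 2 / (N - 2) * W̃₃` because `A` is orthogonal to additive matrices (`sum_What_sq`).
-/


open Finset

/-- Expectation under the uniform distribution on permutations of `Fin N`. -/
noncomputable def pE {N : ℕ} (f : Equiv.Perm (Fin N) → ℝ) : ℝ :=
  (∑ π : Equiv.Perm (Fin N), f π) / (Fintype.card (Equiv.Perm (Fin N)) : ℝ)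

/-- Covariance under the uniform distribution on permutations of `Fin N`. -/
noncomputable def pCov {N : ℕ} (f g : Equiv.Perm (Fin N) → ℝ) : ℝ :=
  pE (fun π => (f π - pE f) * (g π - pE g))

/-- Within-first-group sum: sums `W i j` over pairs both assigned to the first `m` labels. -/
noncomputable def Ux {N : ℕ} (W : Matrix (Fin N) (Fin N) ℝ) (m : ℕ)
    (π : Equiv.Perm (Fin N)) : ℝ :=
  ∑ i, ∑ j, if (π i : ℕ) < m ∧ (π j : ℕ) < m then W i j else 0

/-- Within-second-group sum: sums `W i j` over pairs both assigned to labels `> m`. -/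
noncomputable def Uy {N : ℕ} (W : Matrix (Fin N) (Fin N) ℝ) (m : ℕ)
    (π : Equiv.Perm (Fin N)) : ℝ :=
  ∑ i, ∑ j, if m ≤ (π i : ℕ) ∧ m ≤ (π j : ℕ) then W i j else 0
/-- The doubly-centered version of a symmetric zero-diagonal matrix. -/
noncomputable def What {N : ℕ} (W : Matrix (Fin N) (Fin N) ℝ) : Matrix (Fin N) (Fin N) ℝ :=
  Matrix.of fun i j =>
    if i = j then 0
    else
      W i j - (∑ a, ∑ b, W a b) / ((N : ℝ) * ((N : ℝ) - 1))
        - (((∑ b, W i b) - (∑ a, ∑ b, W a b) / (N : ℝ))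
            + ((∑ b, W j b) - (∑ a, ∑ b, W a b) / (N : ℝ))) / ((N : ℝ) - 2)


/-- The indicator that `π` places index `i` in the first group, i.e. gives it a label below `m`. -/
noncomputable def groupInd {N : ℕ} (m : ℕ) (π : Equiv.Perm (Fin N)) (i : Fin N) : ℝ :=
  if (π i : ℕ) < m then 1 else 0

/-- The additive part of `W`: off the diagonal, `W i j = What W i j + addPart W i + addPart W j`. -/
noncomputable def addPart {N : ℕ} (W : Matrix (Fin N) (Fin N) ℝ) (i : Fin N) : ℝ :=
  (∑ a, ∑ b, W a b) / (2 * ((N : ℝ) * ((N : ℝ) - 1)))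
    + ((∑ b, W i b) - (∑ a, ∑ b, W a b) / (N : ℝ)) / ((N : ℝ) - 2)

/-- The probability that `k ≤ N` given distinct indices all land in a group of size `m` out of `N`. -/
noncomputable def hitProb (m N k : ℕ) : ℝ :=
  ∏ a ∈ range k, ((m : ℝ) - a) / ((N : ℝ) - a)

/-! ### Expectation over permutations -/

section Expectation

variable {N : ℕ}

lemma pE_const (c : ℝ) : pE (fun _ : Equiv.Perm (Fin N) => c) = c := by
  have h : (Fintype.card (Equiv.Perm (Fin N)) : ℝ) ≠ 0 := by
    exact_mod_cast Fintype.card_ne_zero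
  simp only [pE, sum_const, card_univ, nsmul_eq_mul]
  field_simp

lemma pE_add (f g : Equiv.Perm (Fin N) → ℝ) :
    pE (fun π => f π + g π) = pE f + pE g := by
  simp only [pE, sum_add_distrib, add_div]

lemma pE_const_mul (c : ℝ) (f : Equiv.Perm (Fin N) → ℝ) :
    pE (fun π => c * f π) = c * pE f := by
  simp only [pE, ← mul_sum, mul_div_assoc]

lemma pE_sum {ι : Type*} (s : Finset ι) (f : ι → Equiv.Perm (Fin N) → ℝ) :
    pE (fun π => ∑ i ∈ s, f i π) = ∑ i ∈ s, pE (f i) := by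
  simp only [pE, ← sum_div]
  rw [sum_comm]

lemma pE_mul_right (f : Equiv.Perm (Fin N) → ℝ) (σ : Equiv.Perm (Fin N)) :
    pE (fun π => f (π * σ)) = pE f := by
  simp only [pE]
  congr 1
  exact Equiv.sum_comp (Equiv.mulRight σ) f

end Expectation

/-! ### Joint moments of the group indicators -/

section Moments

variable {N : ℕ} {m : ℕ}

lemma groupInd_sq (π : Equiv.Perm (Fin N)) (i : Fin N) :
    groupInd m π i * groupInd m π i = groupInd m π i := by
  unfold groupInd; split_ifs <;> simp

lemma sum_groupInd (h : m ≤ N) (π : Equiv.Perm (Fin N)) :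
    ∑ i, groupInd m π i = m := by
  simp only [groupInd]
  rw [Equiv.sum_comp π (fun i : Fin N => if (i : ℕ) < m then (1 : ℝ) else 0)]
  rw [Finset.sum_boole, Fin.card_filter_val_lt, min_eq_right h]

/-- Joint moments of the group indicators are exchangeable. -/
lemma pE_prod_congr {s t : Finset (Fin N)} (h : s.card = t.card) :
    pE (fun π => ∏ i ∈ s, groupInd m π i) = pE (fun π => ∏ i ∈ t, groupInd m π i) := by
  obtain ⟨σ, hσ⟩ : ∃ σ : Equiv.Perm (Fin N), s.map σ.toEmbedding = t := by
    let e : {x // x ∈ s} ≃ {x // x ∈ t} := Finset.equivOfCardEq h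
    refine ⟨e.extendSubtype, ?_⟩
    refine Finset.eq_of_subset_of_card_le ?_ (by simp [h])
    intro y hy
    obtain ⟨x, hx, rfl⟩ := Finset.mem_map.1 hy
    exact e.extendSubtype_mem x hx
  rw [← pE_mul_right (fun π => ∏ i ∈ s, groupInd m π i) σ, ← hσ]
  congr 1
  funext π
  rw [prod_map]
  rfl

/-- Summing over the index `l` added to `s`: on the event that all of `s` is in the first group,
exactly `m - #s` further indices are. -/
lemma sum_pE_prod_insert (h : m ≤ N) (s : Finset (Fin N)) :
    ∑ l ∈ sᶜ, pE (fun π => ∏ i ∈ insert l s, groupInd m π i)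
      = ((m : ℝ) - s.card) * pE (fun π => ∏ i ∈ s, groupInd m π i) := by
  rw [← pE_sum, ← pE_const_mul]
  congr 1
  funext π
  have h1 : ∀ l ∈ sᶜ, ∏ i ∈ insert l s, groupInd m π i
      = groupInd m π l * ∏ i ∈ s, groupInd m π i := by
    intro l hl
    exact prod_insert (by simpa using hl)
  rw [sum_congr rfl h1, ← sum_mul]
  by_cases hs : ∀ i ∈ s, groupInd m π i = 1
  · congr 1
    have := sum_add_sum_compl s (groupInd m π)
    rw [sum_groupInd h, sum_congr rfl hs] at this
    simp at this
    linarith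
  · push Not at hs
    obtain ⟨i, hi, hne⟩ := hs
    have h0 : groupInd m π i = 0 := by
      unfold groupInd at hne ⊢; split_ifs at hne ⊢ <;> simp_all
    rw [prod_eq_zero hi h0]; simp

lemma pE_prod (h : m ≤ N) (s : Finset (Fin N)) :
    pE (fun π => ∏ i ∈ s, groupInd m π i) = hitProb m N s.card := by
  induction s using Finset.induction_on with
  | empty => simp [hitProb, pE_const]
  | insert l s hl ih =>
    have hrec := sum_pE_prod_insert h s
    have hc : ∀ l' ∈ sᶜ, pE (fun π => ∏ i ∈ insert l' s, groupInd m π i)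
        = pE (fun π => ∏ i ∈ insert l s, groupInd m π i) := by
      intro l' hl'
      apply pE_prod_congr
      rw [card_insert_of_notMem hl, card_insert_of_notMem (by simpa using hl')]
    have hlt : s.card < N := by
      have := card_le_univ (insert l s)
      rw [card_insert_of_notMem hl, Fintype.card_fin] at this
      omega
    rw [sum_congr rfl hc, sum_const, card_compl, Fintype.card_fin, nsmul_eq_mul,
      Nat.cast_sub hlt.le, ih] at hrec
    have hne : (N : ℝ) - s.card ≠ 0 := by
      have : (s.card : ℝ) < N := by exact_mod_cast hlt
      linarith
    rw [card_insert_of_notMem hl, hitProb, prod_range_succ, ← hitProb,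
      mul_div_assoc', eq_div_iff hne]
    linarith

lemma pE_two (h : m ≤ N) {i j : Fin N} (hij : i ≠ j) :
    pE (fun π => groupInd m π i * groupInd m π j) = hitProb m N 2 := by
  have := pE_prod h {i, j}
  rwa [card_pair hij, funext fun π => prod_pair hij] at this

lemma prod_four (π : Equiv.Perm (Fin N)) (i j k l : Fin N) :
    groupInd m π i * groupInd m π j * (groupInd m π k * groupInd m π l)
      = ∏ a ∈ ({i, j, k, l} : Finset (Fin N)), groupInd m π a := by
  have key : ∀ (a : Fin N) (s : Finset (Fin N)),
      ∏ b ∈ insert a s, groupInd m π b = groupInd m π a * ∏ b ∈ s, groupInd m π b := by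
    intro a s
    by_cases ha : a ∈ s
    · rw [insert_eq_of_mem ha, ← mul_prod_erase s _ ha, ← mul_assoc, groupInd_sq]
    · exact prod_insert ha
  rw [key, key, key, prod_singleton]
  ring

/-- Fourth moments, as an affine function of the coincidence pattern of the two pairs. -/
lemma pE_four (h : m ≤ N) {i j k l : Fin N} (hij : i ≠ j) (hkl : k ≠ l) :
    pE (fun π => groupInd m π i * groupInd m π j * (groupInd m π k * groupInd m π l))
      = hitProb m N 4
        + (hitProb m N 3 - hitProb m N 4) * ((if i = k then 1 else 0) + (if i = l then 1 else 0)
          + (if j = k then 1 else 0) + (if j = l then 1 else 0))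
        + (hitProb m N 2 - 2 * hitProb m N 3 + hitProb m N 4)
          * ((if i = k then 1 else 0) * (if j = l then 1 else 0)
            + (if i = l then 1 else 0) * (if j = k then 1 else 0)) := by
  rw [funext fun π => prod_four π i j k l, pE_prod h]
  by_cases h1 : i = k <;> by_cases h2 : i = l <;> by_cases h3 : j = k <;> by_cases h4 : j = l <;>
    simp_all <;> ring

end Moments

/-! ### Quadratic forms with zero row sums -/

section Quadratic

variable {N : ℕ} {m : ℕ} {A : Matrix (Fin N) (Fin N) ℝ}

lemma pE_quad (h : m ≤ N) (hd : ∀ i, A i i = 0) (hrow : ∀ i, ∑ j, A i j = 0) :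
    pE (fun π => ∑ i, ∑ j, A i j * (groupInd m π i * groupInd m π j)) = 0 := by
  rw [pE_sum]
  refine sum_eq_zero fun i _ => ?_
  rw [pE_sum]
  have : ∀ j, pE (fun π => A i j * (groupInd m π i * groupInd m π j))
      = A i j * hitProb m N 2 := by
    intro j
    rw [pE_const_mul]
    by_cases hij : i = j
    · subst hij; simp [hd]
    · rw [pE_two h hij]
  simp only [this]
  rw [← sum_mul, hrow, zero_mul]

/-- Second moment of the quadratic form of a matrix with zero diagonal and zero row sums. -/
lemma pE_quad_sq (h : m ≤ N) (hd : ∀ i, A i i = 0) (hs : ∀ i j, A i j = A j i)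
    (hrow : ∀ i, ∑ j, A i j = 0) :
    pE (fun π => (∑ i, ∑ j, A i j * (groupInd m π i * groupInd m π j))
        * (∑ i, ∑ j, A i j * (groupInd m π i * groupInd m π j)))
      = 2 * (hitProb m N 2 - 2 * hitProb m N 3 + hitProb m N 4) * ∑ i, ∑ j, (A i j) ^ 2 := by
  have hcol : ∀ j, ∑ i, A i j = 0 := fun j => by
    rw [← hrow j]; exact sum_congr rfl fun i _ => hs i j
  -- For a fixed first pair, the inner sum over the second pair collapses to `2 c (A i j)²`,
  -- where `c = p₂ - 2 p₃ + p₄`.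
  have inner : ∀ i j, pE (fun π => ∑ k, ∑ l, A i j * (groupInd m π i * groupInd m π j)
        * (A k l * (groupInd m π k * groupInd m π l)))
      = 2 * (hitProb m N 2 - 2 * hitProb m N 3 + hitProb m N 4) * (A i j) ^ 2 := by
    intro i j
    by_cases hij : i = j
    · subst hij; simp [hd, pE_const]
    have step : ∀ k l, pE (fun π => A i j * (groupInd m π i * groupInd m π j)
        * (A k l * (groupInd m π k * groupInd m π l)))
        = A i j * (hitProb m N 4 * A k l
          + (hitProb m N 3 - hitProb m N 4) * ((if i = k then A k l else 0)
            + (if i = l then A k l else 0)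
            + (if j = k then A k l else 0) + (if j = l then A k l else 0))
          + (hitProb m N 2 - 2 * hitProb m N 3 + hitProb m N 4)
            * ((if i = k then if j = l then A k l else 0 else 0)
              + (if i = l then if j = k then A k l else 0 else 0))) := by
      intro k l
      by_cases hkl : k = l
      · subst hkl; simp [hd, pE_const]
      rw [show (fun π => A i j * (groupInd m π i * groupInd m π j)
        * (A k l * (groupInd m π k * groupInd m π l))) = fun π => (A i j * A k l) *
          (groupInd m π i * groupInd m π j * (groupInd m π k * groupInd m π l)) from
          funext fun π => by ring, pE_const_mul, pE_four h hij hkl]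
      split_ifs <;> ring
    rw [pE_sum]
    simp_rw [pE_sum, step]
    have e1 : ∑ k, ∑ l, (if i = k then A k l else 0) = 0 := by
      rw [sum_comm]; simp [hrow]
    have e2 : ∑ k, ∑ l, (if i = l then A k l else 0) = 0 := by simp [hcol]
    have e3 : ∑ k, ∑ l, (if j = k then A k l else 0) = 0 := by
      rw [sum_comm]; simp [hrow]
    have e4 : ∑ k, ∑ l, (if j = l then A k l else 0) = 0 := by simp [hcol]
    have e5 : ∑ k, ∑ l, (if i = k then if j = l then A k l else 0 else 0) = A i j := by
      rw [sum_comm]; simp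
    have e6 : ∑ k, ∑ l, (if i = l then if j = k then A k l else 0 else 0) = A i j := by
      simp [hs j i]
    have e7 : ∑ k, ∑ l, A k l = 0 := by simp [hrow]
    simp only [← mul_sum, sum_add_distrib, e1, e2, e3, e4, e5, e6, e7]
    ring
  have expand : ∀ π : Equiv.Perm (Fin N),
      (∑ i, ∑ j, A i j * (groupInd m π i * groupInd m π j))
        * (∑ i, ∑ j, A i j * (groupInd m π i * groupInd m π j))
      = ∑ i, ∑ j, ∑ k, ∑ l, A i j * (groupInd m π i * groupInd m π j)
        * (A k l * (groupInd m π k * groupInd m π l)) := by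
    intro π
    simp only [← mul_sum, ← sum_mul]
  rw [funext expand, pE_sum, mul_sum]
  refine sum_congr rfl fun i _ => ?_
  rw [pE_sum, mul_sum]
  exact sum_congr rfl fun j _ => inner i j

end Quadratic

/-! ### The doubly-centered matrix -/

section Centering

variable {N : ℕ} {W : Matrix (Fin N) (Fin N) ℝ}

lemma What_diag (i : Fin N) : What W i i = 0 := by simp [What]

lemma What_off {i j : Fin N} (h : i ≠ j) :
    What W i j = W i j - (addPart W i + addPart W j) := by
  simp only [What, Matrix.of_apply, if_neg h, addPart]
  have : ∀ x y : ℝ, x / y = 2 * (x / (2 * y)) := fun x y => by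
    rw [mul_div_assoc', mul_div_mul_left _ _ two_ne_zero]
  rw [this (∑ a, ∑ b, W a b) ((N : ℝ) * ((N : ℝ) - 1))]
  ring

lemma What_symm (hsym : W.IsSymm) (i j : Fin N) : What W i j = What W j i := by
  by_cases h : i = j
  · rw [h]
  · rw [What_off h, What_off (Ne.symm h), hsym.apply i j]; ring

lemma W_eq (hdiag : ∀ i, W i i = 0) (i j : Fin N) :
    W i j = What W i j + (if i = j then 0 else addPart W i + addPart W j) := by
  by_cases h : i = j
  · subst h; simp [hdiag, What_diag]
  · rw [What_off h, if_neg h]; ring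

lemma sum_addPart (hN : 4 ≤ N) :
    ∑ i, addPart W i = (∑ a, ∑ b, W a b) / (2 * ((N : ℝ) - 1)) := by
  have hN' : (4 : ℝ) ≤ N := by exact_mod_cast hN
  have h0 : (N : ℝ) ≠ 0 := by linarith
  have h1 : (N : ℝ) - 1 ≠ 0 := by linarith
  simp only [addPart, sum_add_distrib, ← sum_div, sum_sub_distrib, sum_const, card_univ,
    Fintype.card_fin, nsmul_eq_mul]
  field_simp
  ring

lemma sum_What_row (hN : 4 ≤ N) (hdiag : ∀ i, W i i = 0) (i : Fin N) :
    ∑ j, What W i j = 0 := by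
  have hN' : (4 : ℝ) ≤ N := by exact_mod_cast hN
  have h0 : (N : ℝ) ≠ 0 := by linarith
  have h1 : (N : ℝ) - 1 ≠ 0 := by linarith
  have h2 : (N : ℝ) - 2 ≠ 0 := by linarith
  have e : ∀ j, What W i j = W i j - (addPart W i + addPart W j)
      + (if i = j then addPart W i + addPart W j else 0) := by
    intro j
    rw [W_eq hdiag i j]
    split_ifs <;> ring
  simp only [e, sum_add_distrib, sum_sub_distrib, sum_addPart hN, sum_const, card_univ,
    Fintype.card_fin, nsmul_eq_mul, sum_ite_eq, mem_univ, if_true]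
  simp only [addPart]
  field_simp
  ring

/-- `What W` is orthogonal to the additive part, so its squared norm is `⟨W, W⟩` minus
`⟨W, additive part⟩`. -/
lemma sum_What_sq (hN : 4 ≤ N) (hsym : W.IsSymm) (hdiag : ∀ i, W i i = 0) :
    ∑ i, ∑ j, (What W i j) ^ 2 =
      ((∑ i, ∑ j, W i j * W i j)
            - (∑ i, ∑ j, W i j) * (∑ i, ∑ j, W i j) / ((N : ℝ) * ((N : ℝ) - 1)))
          - (2 / ((N : ℝ) - 2)) *
            ((∑ i, ∑ j, ∑ r, W i j * W i r)
              - (∑ i, ∑ j, W i j) * (∑ i, ∑ j, W i j) / (N : ℝ)) := by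
  have hN' : (4 : ℝ) ≤ N := by exact_mod_cast hN
  have h0 : (N : ℝ) ≠ 0 := by linarith
  have h1 : (N : ℝ) - 1 ≠ 0 := by linarith
  have h2 : (N : ℝ) - 2 ≠ 0 := by linarith
  have hrow := sum_What_row (W := W) hN hdiag
  have hcol : ∀ j, ∑ i, What W i j = 0 := fun j => by
    rw [← hrow j]; exact sum_congr rfl fun i _ => What_symm hsym i j
  have hWcol : ∀ j, ∑ i, W i j = ∑ i, W j i := fun j =>
    sum_congr rfl fun i _ => hsym.apply j i
  have e : ∀ i j, (What W i j) ^ 2 = W i j * W i j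
      - (addPart W i * W i j + addPart W j * W i j)
      - (addPart W i * What W i j + addPart W j * What W i j) := by
    intro i j
    rw [W_eq hdiag i j]
    split_ifs with h
    · subst h; simp [What_diag]
    · ring
  have a1 : ∑ i, ∑ j, addPart W j * W i j = ∑ i, addPart W i * ∑ j, W i j := by
    rw [sum_comm]; simp only [← mul_sum, hWcol]
  have a2 : ∑ i, ∑ j, addPart W j * What W i j = 0 := by
    rw [sum_comm]; simp only [← mul_sum, hcol]; simp
  have a3 : ∑ i, ∑ j, ∑ r, W i j * W i r = ∑ i, (∑ j, W i j) * (∑ j, W i j) := by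
    simp only [← mul_sum, ← sum_mul]
  have a4 : ∑ i, addPart W i * ∑ j, W i j
      = (∑ a, ∑ b, W a b) * (∑ a, ∑ b, W a b) / (2 * ((N : ℝ) * ((N : ℝ) - 1)))
        + (∑ i, (∑ j, W i j) * (∑ j, W i j)
          - (∑ a, ∑ b, W a b) * (∑ a, ∑ b, W a b) / N) / ((N : ℝ) - 2) := by
    have : ∀ i, addPart W i * ∑ j, W i j
        = (∑ a, ∑ b, W a b) / (2 * ((N : ℝ) * ((N : ℝ) - 1))) * (∑ j, W i j)
        + ((∑ j, W i j) * (∑ j, W i j)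
          - (∑ a, ∑ b, W a b) / N * (∑ j, W i j)) / ((N : ℝ) - 2) := by
      intro i; simp only [addPart]; ring
    simp only [this, sum_add_distrib, ← mul_sum, ← sum_div, sum_sub_distrib]
    ring
  have a5 : ∑ i, ∑ j, addPart W i * W i j = ∑ i, addPart W i * ∑ j, W i j := by
    simp only [← mul_sum]
  have a6 : ∑ i, ∑ j, addPart W i * What W i j = 0 := by
    simp only [← mul_sum, hrow]; simp
  rw [← a3] at a4
  simp only [e, sum_add_distrib, sum_sub_distrib, a1, a2]
  simp only [a5, a6, a4]
  field_simp
  ring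

end Centering

/-! ### The weighted statistic and its variance -/

/-- The weighted statistic is a constant plus the quadratic form of `What W` in the indicators. -/
lemma Uw_eq {m n N : ℕ} (hm : 2 ≤ m) (hn : 2 ≤ n) (hN : N = m + n)
    {W : Matrix (Fin N) (Fin N) ℝ} (hsym : W.IsSymm) (hdiag : ∀ i, W i i = 0)
    (π : Equiv.Perm (Fin N)) :
    (((n : ℝ) - 1) * Ux W m π + ((m : ℝ) - 1) * Uy W m π) / ((N : ℝ) - 2)
      = 2 * (((m : ℝ) - 1) * ((n : ℝ) - 1)) * (∑ i, addPart W i) / ((N : ℝ) - 2)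
        + ∑ i, ∑ j, What W i j * (groupInd m π i * groupInd m π j) := by
  have hN4 : 4 ≤ N := by omega
  have hNr : (N : ℝ) = m + n := by rw [hN]; push_cast; ring
  have hN' : (4 : ℝ) ≤ N := by exact_mod_cast hN4
  have h2 : (N : ℝ) - 2 ≠ 0 := by linarith
  have hrow := sum_What_row (W := W) hN4 hdiag
  have hcol : ∀ j, ∑ i, What W i j = 0 := fun j => by
    rw [← hrow j]; exact sum_congr rfl fun i _ => What_symm hsym i j
  have hx := sum_groupInd (m := m) (by omega : m ≤ N) π
  set x := groupInd m π with hxdef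
  have hxx : ∀ i, x i * x i = x i := groupInd_sq π
  set κ : Fin N → Fin N → ℝ := fun i j =>
    ((n : ℝ) - 1) * (x i * x j) + ((m : ℝ) - 1) * ((1 - x i) * (1 - x j)) with hκ
  have hU : ((n : ℝ) - 1) * Ux W m π + ((m : ℝ) - 1) * Uy W m π = ∑ i, ∑ j, W i j * κ i j := by
    simp only [Ux, Uy, mul_sum, ← sum_add_distrib]
    refine sum_congr rfl fun i _ => sum_congr rfl fun j _ => ?_
    simp only [hκ, hxdef, groupInd, ← not_lt]
    by_cases h1 : (π i : ℕ) < m <;> by_cases h2 : (π j : ℕ) < m <;> simp [h1, h2] <;> ring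
  -- The weights make the off-diagonal row sums of `κ` independent of the assignment.
  have hκrow : ∀ i, ∑ j, (if i = j then 0 else κ i j) = ((m : ℝ) - 1) * ((n : ℝ) - 1) := by
    intro i
    have e : ∀ j, (if i = j then 0 else κ i j) = κ i j - (if i = j then κ i j else 0) := by
      intro j; split_ifs <;> simp
    simp only [e, sum_sub_distrib, sum_ite_eq, mem_univ, if_true]
    simp only [hκ, sum_add_distrib, ← mul_sum, sum_sub_distrib, hx, sum_const, card_univ,
      Fintype.card_fin, nsmul_eq_mul, hNr]
    linear_combination (-(((n : ℝ) - 1) + ((m : ℝ) - 1))) * hxx i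
  have hκsymm : ∀ i j, κ i j = κ j i := fun i j => by simp only [hκ]; ring
  have hκcol : ∀ j, ∑ i, (if i = j then 0 else κ i j) = ((m : ℝ) - 1) * ((n : ℝ) - 1) := by
    intro j
    rw [← hκrow j]
    exact sum_congr rfl fun i _ => by rw [hκsymm i j]; simp only [eq_comm]
  have e : ∀ i j, W i j * κ i j = ((N : ℝ) - 2) * (What W i j * (x i * x j))
      + ((m : ℝ) - 1) * ((1 - x i) * What W i j - x j * What W i j)
      + (addPart W i * (if i = j then 0 else κ i j)
        + addPart W j * (if i = j then 0 else κ i j)) := by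
    intro i j
    rw [W_eq hdiag i j, hNr]
    split_ifs with h
    · subst h; simp [What_diag]
    · simp only [hκ]; ring
  have c1 : ∑ i, ∑ j, x j * What W i j = 0 := by
    rw [sum_comm]; simp only [← mul_sum, hcol]; simp
  have c2 : ∑ i, ∑ j, addPart W j * (if i = j then 0 else κ i j)
      = (∑ i, addPart W i) * (((m : ℝ) - 1) * ((n : ℝ) - 1)) := by
    rw [sum_comm]; simp only [← mul_sum, hκcol, sum_mul]
  have c3 : ∑ i, ∑ j, addPart W i * (if i = j then 0 else κ i j)
      = (∑ i, addPart W i) * (((m : ℝ) - 1) * ((n : ℝ) - 1)) := by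
    simp only [← mul_sum, hκrow, sum_mul]
  have c4 : ∑ i, ∑ j, (1 - x i) * What W i j = 0 := by
    simp only [← mul_sum, hrow]; simp
  rw [hU]
  simp only [e, sum_add_distrib, c2, c3]
  simp only [← mul_sum _ _ ((N : ℝ) - 2), ← mul_sum _ _ ((m : ℝ) - 1), sum_sub_distrib, c1, c4]
  field_simp
  ring

/-- The variance as an explicit multiple of the squared Frobenius norm of `What W`. -/
lemma pCov_Uw {m n N : ℕ} (hm : 2 ≤ m) (hn : 2 ≤ n) (hN : N = m + n)
    {W : Matrix (Fin N) (Fin N) ℝ} (hsym : W.IsSymm) (hdiag : ∀ i, W i i = 0) :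
    pCov
        (fun π => (((n : ℝ) - 1) * Ux W m π + ((m : ℝ) - 1) * Uy W m π) / ((N : ℝ) - 2))
        (fun π => (((n : ℝ) - 1) * Ux W m π + ((m : ℝ) - 1) * Uy W m π) / ((N : ℝ) - 2)) =
      (2 * (m : ℝ) * (n : ℝ) * ((m : ℝ) - 1) * ((n : ℝ) - 1)
          / ((N : ℝ) * ((N : ℝ) - 1) * ((N : ℝ) - 2) * ((N : ℝ) - 3))) *
        ∑ i, ∑ j, (What W i j) ^ 2 := by
  have hN4 : 4 ≤ N := by omega
  have hmN : m ≤ N := by omega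
  have hN' : (4 : ℝ) ≤ N := by exact_mod_cast hN4
  have h0 : (N : ℝ) ≠ 0 := by linarith
  have h1 : (N : ℝ) - 1 ≠ 0 := by linarith
  have h2 : (N : ℝ) - 2 ≠ 0 := by linarith
  have h3 : (N : ℝ) - 3 ≠ 0 := by linarith
  have hnr : (n : ℝ) = N - m := by rw [hN]; push_cast; ring
  have hrow := sum_What_row (W := W) hN4 hdiag
  simp only [pCov, Uw_eq hm hn hN hsym hdiag, pE_add, pE_const,
    pE_quad hmN What_diag hrow, add_zero, add_sub_cancel_left]
  rw [pE_quad_sq hmN What_diag (What_symm hsym) hrow]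
  congr 1
  simp only [hitProb, prod_range_succ, prod_range_zero, hnr]
  push_cast
  field_simp
  ring

theorem stmt_11 (m n N : ℕ) (hm : 2 ≤ m) (hn : 2 ≤ n) (hN : N = m + n)
    (W : Matrix (Fin N) (Fin N) ℝ) (hsym : W.IsSymm) (hdiag : ∀ i, W i i = 0) :
    (pCov
        (fun π => (((n : ℝ) - 1) * Ux W m π + ((m : ℝ) - 1) * Uy W m π) / ((N : ℝ) - 2))
        (fun π => (((n : ℝ) - 1) * Ux W m π + ((m : ℝ) - 1) * Uy W m π) / ((N : ℝ) - 2)) =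
      (2 * (m : ℝ) * (n : ℝ) * ((m : ℝ) - 1) * ((n : ℝ) - 1)
          / ((N : ℝ) * ((N : ℝ) - 1) * ((N : ℝ) - 2) * ((N : ℝ) - 3))) *
        (((∑ i, ∑ j, W i j * W i j)
            - (∑ i, ∑ j, W i j) * (∑ i, ∑ j, W i j) / ((N : ℝ) * ((N : ℝ) - 1)))
          - (2 / ((N : ℝ) - 2)) *
            ((∑ i, ∑ j, ∑ r, W i j * W i r)
              - (∑ i, ∑ j, W i j) * (∑ i, ∑ j, W i j) / (N : ℝ))))
    ∧ (∃ c : ℝ, 0 < c ∧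
        pCov
          (fun π => (((n : ℝ) - 1) * Ux W m π + ((m : ℝ) - 1) * Uy W m π) / ((N : ℝ) - 2))
          (fun π => (((n : ℝ) - 1) * Ux W m π + ((m : ℝ) - 1) * Uy W m π) / ((N : ℝ) - 2))
          = c * ∑ i, ∑ j, (What W i j) ^ 2)
    ∧ 0 ≤ pCov
          (fun π => (((n : ℝ) - 1) * Ux W m π + ((m : ℝ) - 1) * Uy W m π) / ((N : ℝ) - 2))
          (fun π => (((n : ℝ) - 1) * Ux W m π + ((m : ℝ) - 1) * Uy W m π) / ((N : ℝ) - 2))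
    ∧ (pCov
          (fun π => (((n : ℝ) - 1) * Ux W m π + ((m : ℝ) - 1) * Uy W m π) / ((N : ℝ) - 2))
          (fun π => (((n : ℝ) - 1) * Ux W m π + ((m : ℝ) - 1) * Uy W m π) / ((N : ℝ) - 2)) = 0
        ↔ What W = 0) := by
  have hform := pCov_Uw hm hn hN hsym hdiag
  have hm' : (2 : ℝ) ≤ m := by exact_mod_cast hm
  have hn' : (2 : ℝ) ≤ n := by exact_mod_cast hn
  have hNr : (N : ℝ) = m + n := by rw [hN]; push_cast; ring
  have hc : 0 < 2 * (m : ℝ) * (n : ℝ) * ((m : ℝ) - 1) * ((n : ℝ) - 1)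
      / ((N : ℝ) * ((N : ℝ) - 1) * ((N : ℝ) - 2) * ((N : ℝ) - 3)) := by
    have a1 : 0 < (m : ℝ) - 1 := by linarith
    have a2 : 0 < (n : ℝ) - 1 := by linarith
    have a3 : 0 < (N : ℝ) - 1 := by linarith
    have a4 : 0 < (N : ℝ) - 2 := by linarith
    have a5 : 0 < (N : ℝ) - 3 := by linarith
    have a6 : 0 < (N : ℝ) := by linarith
    positivity
  have hF : 0 ≤ ∑ i, ∑ j, (What W i j) ^ 2 :=
    sum_nonneg fun i _ => sum_nonneg fun j _ => sq_nonneg _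
  refine ⟨?_, ⟨_, hc, hform⟩, ?_, ?_⟩
  · rw [hform, sum_What_sq (by omega) hsym hdiag]
  · rw [hform]; exact mul_nonneg hc.le hF
  · rw [hform, mul_eq_zero, or_iff_right hc.ne']
    constructor
    · intro h
      ext i j
      have hi := (sum_eq_zero_iff_of_nonneg fun i _ =>
        sum_nonneg fun j _ => sq_nonneg (What W i j)).1 h i (mem_univ i)
      have hij := (sum_eq_zero_iff_of_nonneg fun j _ =>
        sq_nonneg (What W i j)).1 hi j (mem_univ j)
      exact (pow_eq_zero_iff two_ne_zero).1 hij
    · intro h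
      simp [h]
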